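/- arXiv:2509.02364 — 3 statements merged into one kernel-verified Lean document; each statement's English description precedes it below -/
import Mathlib

section
/- Assume there exists G* ∈ ℕ such that for all (i,j) with j ≠ G*, every σ₂-closed element of W_{i,j} is σ₂-exact (ker σ₂ ∩ W_{i,j} ⊆ σ₂(W_{i,j+2})), i.e., the σ₂-cohomology is concentrated in second degree G*. Let x₀ ∈ W_{G₁,G₂} with σ₂x₀ = 0 and K := ⌊G₁/2⌋, and suppose G* is not of the form G₂ + 2k for any 0 ≤ k ≤ K−1. Then there exists a full chain starting from x₀ (part of Lemma 2, point 3: the chain equations are automatically consistent away from the critical level). -/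
/-!
The chain is built by recursion on `k`, carrying the invariant `σ₂ (σ₁ x_k) = 0`. It holds at
`k = 0` because `σ₂ x₀ = 0` and `σ₁`, `σ₂` anticommute. Given it at `k < ⌊G₁/2⌋`, the element
`-σ₁ x_k` is `σ₂`-closed of second degree `G₂ + 2k ≠ G*`, hence equals `σ₂ x_{k+1}` for some
`x_{k+1}` of the required bidegree, and the invariant persists since
`σ₂ σ₁ x_{k+1} = -σ₁ σ₂ x_{k+1} = σ₁ σ₁ x_k = 0`.
-/

open DirectSum

theorem chain_consistent_away_from_critical_level
    {R : Type*} [CommRing R] {W : Type*} [AddCommGroup W] [Module R W]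
    (𝒲 : ℕ × ℕ → Submodule R W) [DirectSum.Decomposition 𝒲]
    (σ₁ σ₂ : W →ₗ[R] W)
    (hσ₁mem : ∀ i j, 2 ≤ i → ∀ x ∈ 𝒲 (i, j), σ₁ x ∈ 𝒲 (i - 2, j))
    (hσ₁zero : ∀ i j, i ≤ 1 → ∀ x ∈ 𝒲 (i, j), σ₁ x = 0)
    (hσ₂mem : ∀ i j, 2 ≤ j → ∀ x ∈ 𝒲 (i, j), σ₂ x ∈ 𝒲 (i, j - 2))
    (hσ₂zero : ∀ i j, j ≤ 1 → ∀ x ∈ 𝒲 (i, j), σ₂ x = 0)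
    (hσ₁σ₁ : σ₁ ∘ₗ σ₁ = 0) (hσ₂σ₂ : σ₂ ∘ₗ σ₂ = 0)
    (hanti : σ₁ ∘ₗ σ₂ + σ₂ ∘ₗ σ₁ = 0)
    (Gstar : ℕ)
    (hconc : ∀ i j, j ≠ Gstar → ∀ x ∈ 𝒲 (i, j), σ₂ x = 0 →
        x ∈ Submodule.map σ₂ (𝒲 (i, j + 2)))
    (G₁ G₂ : ℕ) (x₀ : W) (hx₀mem : x₀ ∈ 𝒲 (G₁, G₂)) (hx₀closed : σ₂ x₀ = 0)
    (havoid : ∀ k, k < G₁ / 2 → G₂ + 2 * k ≠ Gstar) :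
    ∃ x : ℕ → W, x 0 = x₀ ∧
      (∀ k ≤ G₁ / 2, x k ∈ 𝒲 (G₁ - 2 * k, G₂ + 2 * k)) ∧
      (∀ k < G₁ / 2, σ₁ (x k) = - σ₂ (x (k + 1))) := by
  have anti : ∀ y, σ₂ (σ₁ y) = -σ₁ (σ₂ y) := fun y =>
    eq_neg_of_add_eq_zero_right (LinearMap.congr_fun hanti y)
  -- The bounds are placed inside the existential so that `choose` yields a total step function.
  have step : ∀ (k : ℕ) (y : W), ∃ z : W, k < G₁ / 2 →
      y ∈ 𝒲 (G₁ - 2 * k, G₂ + 2 * k) → σ₂ (σ₁ y) = 0 →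
      z ∈ 𝒲 (G₁ - 2 * (k + 1), G₂ + 2 * (k + 1)) ∧ σ₂ (σ₁ z) = 0 ∧ σ₁ y = -σ₂ z := by
    intro k y
    by_cases h : k < G₁ / 2 ∧ y ∈ 𝒲 (G₁ - 2 * k, G₂ + 2 * k) ∧ σ₂ (σ₁ y) = 0
    · obtain ⟨hk, hy, hc⟩ := h
      have hmem := hσ₁mem _ _ (by omega) y hy
      obtain ⟨z, hz, hzy⟩ := hconc _ _ (havoid k hk) (-σ₁ y) (neg_mem hmem) (by simp [hc])
      refine ⟨z, fun _ _ _ => ⟨?_, ?_, ?_⟩⟩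
      · rwa [show G₁ - 2 * (k + 1) = G₁ - 2 * k - 2 by omega,
          show G₂ + 2 * (k + 1) = G₂ + 2 * k + 2 by omega]
      · rw [anti, hzy, map_neg, neg_neg]
        exact LinearMap.congr_fun hσ₁σ₁ y
      · rw [hzy, neg_neg]
    · exact ⟨0, fun h₁ h₂ h₃ => absurd ⟨h₁, h₂, h₃⟩ h⟩
  choose f hf using step
  let x : ℕ → W := fun n => Nat.rec x₀ f n
  have inv : ∀ k ≤ G₁ / 2, x k ∈ 𝒲 (G₁ - 2 * k, G₂ + 2 * k) ∧ σ₂ (σ₁ (x k)) = 0 := by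
    intro k
    induction k with
    | zero => exact fun _ => ⟨hx₀mem, by simp [x, anti, hx₀closed]⟩
    | succ k ih =>
      intro hk
      obtain ⟨h₁, h₂⟩ := ih (by omega)
      obtain ⟨h₃, h₄, _⟩ := hf k (x k) (by omega) h₁ h₂
      exact ⟨h₃, h₄⟩
  exact ⟨x, rfl, fun k hk => (inv k hk).1,
    fun k hk => (hf k (x k) hk (inv k hk.le).1 (inv k hk.le).2).2.2⟩
end

section
/- Assume there exists G* ∈ ℕ such that for all (i,j) with j ≠ G*, every σ₂-closed element of W_{i,j} is σ₂-exact (ker σ₂ ∩ W_{i,j} ⊆ σ₂(W_{i,j+2})). Let x₀ ∈ W_{G₁,G₂} with σ₂x₀ = 0, K := ⌊G₁/2⌋, and let k* satisfy 0 ≤ k* ≤ K−1 and G₂ + 2k* = G*. If there exist x_k ∈ W_{G₁−2k,G₂+2k} for 0 ≤ k ≤ k*+1 with σ₁x_k = −σ₂x_{k+1} for all 0 ≤ k ≤ k*, then this partial chain extends to a full chain (x_k)_{0 ≤ k ≤ K}. Hence all the chain equations are consistent if and only if the single equation at the level with G₂ + 2k = G* is consistent (Lemma 2, point 3). -/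
/-!
Past the critical level the chain is extended one step at a time. If `σ₁ xₖ₋₁ = -σ₂ xₖ`, then
`σ₂ σ₁ xₖ = -σ₁ σ₂ xₖ = σ₁ σ₁ xₖ₋₁ = 0`, so `σ₁ xₖ` is `σ₂`-closed. It has second degree
`G₂ + 2k`, which differs from `G*` once `k > k*`, hence it equals `σ₂ z` for some `z` of the right
bidegree, and `xₖ₊₁ := -z` continues the chain. The equation at level `k*` belongs to the given
partial chain, and the remaining levels follow by induction on the length.
-/

open DirectSum

theorem chain_extends_past_critical_level
    {R : Type*} [CommRing R] {W : Type*} [AddCommGroup W] [Module R W]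
    (𝒲 : ℕ × ℕ → Submodule R W) [DirectSum.Decomposition 𝒲]
    (σ₁ σ₂ : W →ₗ[R] W)
    (hσ₁mem : ∀ i j, 2 ≤ i → ∀ x ∈ 𝒲 (i, j), σ₁ x ∈ 𝒲 (i - 2, j))
    (hσ₁zero : ∀ i j, i ≤ 1 → ∀ x ∈ 𝒲 (i, j), σ₁ x = 0)
    (hσ₂mem : ∀ i j, 2 ≤ j → ∀ x ∈ 𝒲 (i, j), σ₂ x ∈ 𝒲 (i, j - 2))
    (hσ₂zero : ∀ i j, j ≤ 1 → ∀ x ∈ 𝒲 (i, j), σ₂ x = 0)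
    (hσ₁σ₁ : σ₁ ∘ₗ σ₁ = 0) (hσ₂σ₂ : σ₂ ∘ₗ σ₂ = 0)
    (hanti : σ₁ ∘ₗ σ₂ + σ₂ ∘ₗ σ₁ = 0)
    (Gstar : ℕ)
    (hconc : ∀ i j, j ≠ Gstar → ∀ x ∈ 𝒲 (i, j), σ₂ x = 0 →
        x ∈ Submodule.map σ₂ (𝒲 (i, j + 2)))
    (G₁ G₂ : ℕ) (x₀ : W) (hx₀mem : x₀ ∈ 𝒲 (G₁, G₂)) (hx₀closed : σ₂ x₀ = 0)
    (kstar : ℕ) (hkstar : kstar < G₁ / 2) (hGstar : G₂ + 2 * kstar = Gstar)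
    (x : ℕ → W) (hx0 : x 0 = x₀)
    (hxmem : ∀ k ≤ kstar + 1, x k ∈ 𝒲 (G₁ - 2 * k, G₂ + 2 * k))
    (hxchain : ∀ k ≤ kstar, σ₁ (x k) = - σ₂ (x (k + 1))) :
    ∃ y : ℕ → W, (∀ k ≤ kstar + 1, y k = x k) ∧
      (∀ k ≤ G₁ / 2, y k ∈ 𝒲 (G₁ - 2 * k, G₂ + 2 * k)) ∧
      (∀ k < G₁ / 2, σ₁ (y k) = - σ₂ (y (k + 1))) := by
  have step : ∀ k, kstar < k → k < G₁ / 2 → ∀ v w : W, w ∈ 𝒲 (G₁ - 2 * k, G₂ + 2 * k) →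
      σ₁ v = - σ₂ w →
      ∃ z ∈ 𝒲 (G₁ - 2 * (k + 1), G₂ + 2 * (k + 1)), σ₁ w = - σ₂ z := by
    intro k hk hkK v w hw hvw
    have hmem := hσ₁mem (G₁ - 2 * k) (G₂ + 2 * k) (by omega) w hw
    have hclosed : σ₂ (σ₁ w) = 0 := by
      have h1 : σ₁ (σ₁ v) = 0 := LinearMap.congr_fun hσ₁σ₁ v
      have h2 : σ₁ (σ₂ w) + σ₂ (σ₁ w) = 0 := LinearMap.congr_fun hanti w
      rw [hvw, map_neg, neg_eq_zero] at h1
      rwa [h1, zero_add] at h2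
    obtain ⟨z, hz, hzw⟩ := hconc _ _ (by omega) _ hmem hclosed
    refine ⟨-z, neg_mem ?_, by rw [map_neg, neg_neg, hzw]⟩
    have e1 : G₁ - 2 * (k + 1) = G₁ - 2 * k - 2 := by omega
    have e2 : G₂ + 2 * (k + 1) = G₂ + 2 * k + 2 := by omega
    rw [e1, e2]
    exact hz
  have extend : ∀ n, kstar + 1 ≤ n → n ≤ G₁ / 2 →
      ∃ y : ℕ → W, (∀ k ≤ kstar + 1, y k = x k) ∧
        (∀ k ≤ n, y k ∈ 𝒲 (G₁ - 2 * k, G₂ + 2 * k)) ∧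
        (∀ k < n, σ₁ (y k) = - σ₂ (y (k + 1))) := by
    intro n hn
    induction n, hn using Nat.le_induction with
    | base => exact fun _ => ⟨x, fun _ _ => rfl, hxmem, fun k hk => hxchain k (by omega)⟩
    | succ n hn ih =>
      intro hnK
      obtain ⟨y, hyx, hymem, hychain⟩ := ih (by omega)
      have hprev : σ₁ (y (n - 1)) = - σ₂ (y n) := by
        have h := hychain (n - 1) (by omega)
        rwa [Nat.sub_add_cancel (by omega)] at h
      obtain ⟨z, hz, hyz⟩ := step n (by omega) (by omega) _ _ (hymem n le_rfl) hprev
      have hold : ∀ k ≤ n, Function.update y (n + 1) z k = y k := fun k hk =>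
        Function.update_of_ne (by omega) _ _
      have hnew : Function.update y (n + 1) z (n + 1) = z := Function.update_self _ _ _
      refine ⟨Function.update y (n + 1) z, fun k hk => ?_, fun k hk => ?_, fun k hk => ?_⟩
      · rw [hold k (by omega), hyx k hk]
      · rcases Nat.lt_or_ge n k with h | h
        · obtain rfl : k = n + 1 := by omega
          rwa [hnew]
        · rw [hold k h]
          exact hymem k h
      · rcases Nat.lt_or_ge k n with h | h
        · rw [hold k (by omega), hold (k + 1) h]
          exact hychain k h
        · obtain rfl : k = n := by omega
          rwa [hold k le_rfl, hnew]
  exact extend (G₁ / 2) hkstar le_rfl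
end

section
/- Let (x_k)_{0 ≤ k ≤ K} be a full chain starting from x₀ ∈ W_{G₁,G₂} (so σ₂x₀ = 0, x_k ∈ W_{G₁−2k,G₂+2k}, σ₁x_k = −σ₂x_{k+1} for k < K, and K = ⌊G₁/2⌋). Then J := Σ_{k=0}^{K} x_k is homogeneous of total degree G₁+G₂ and satisfies σ₋J = 0; i.e., every solution of the chain equations assembles into a σ₋-cocycle with base field x₀ (the construction underlying Lemma 2, point 4). -/
/-!
Statement 8: Every full chain `(x_k)_{0≤k≤K}` starting from a `σ₂`-closed
`x₀ ∈ W_{G₁,G₂}` (with `K = ⌊G₁/2⌋`) assembles into a `σ₋`-cocycle: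
`J := Σ_{k=0}^{K} x_k` is homogeneous of total degree `G₁+G₂` and `σ₋ J = 0`.
-/

/-!
Homogeneity holds because the total-degree component is additive in the element
(`totalComponent_sum`) and fixes every element of bidegree `(a, b)` with `a + b = G`
(`totalComponent_of_mem`); each `x_k` has bidegree `(G₁ - 2k, G₂ + 2k)`, where `2k ≤ G₁`.

For the cocycle condition, the partial sums telescope: `σ₂ x₀ = 0` and `σ₂ x_{k+1} = -σ₁ x_k`
give `(σ₁ + σ₂) (x₀ + ⋯ + x_n) = σ₁ x_n` (`sigma_partial_sum`). At `n = ⌊G₁/2⌋` the first degree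
of `x_n` is `G₁ mod 2 ≤ 1`, so `σ₁ x_n = 0`.
-/

open DirectSum

/-- The total-degree-`G` component of an element of a bigraded module. -/
noncomputable def totalComponent {R : Type*} [CommRing R] {W : Type*} [AddCommGroup W]
    [Module R W] (𝒲 : ℕ × ℕ → Submodule R W) [DirectSum.Decomposition 𝒲]
    (x : W) (G : ℕ) : W :=
  ∑ i ∈ Finset.range (G + 1), (DirectSum.decompose 𝒲 x (i, G - i) : W)

theorem totalComponent_sum {R : Type*} [CommRing R] {W : Type*} [AddCommGroup W]
    [Module R W] (𝒲 : ℕ × ℕ → Submodule R W) [DirectSum.Decomposition 𝒲]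
    (s : Finset ℕ) (x : ℕ → W) (G : ℕ) :
    totalComponent 𝒲 (∑ k ∈ s, x k) G = ∑ k ∈ s, totalComponent 𝒲 (x k) G := by
  unfold totalComponent
  rw [Finset.sum_comm]
  refine Finset.sum_congr rfl fun i _ => ?_
  rw [DirectSum.decompose_sum, DFinsupp.finsetSum_apply, AddSubmonoidClass.coe_finsetSum]

theorem totalComponent_of_mem {R : Type*} [CommRing R] {W : Type*} [AddCommGroup W]
    [Module R W] (𝒲 : ℕ × ℕ → Submodule R W) [DirectSum.Decomposition 𝒲]
    {a b G : ℕ} (hG : a + b = G) {x : W} (hx : x ∈ 𝒲 (a, b)) :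
    totalComponent 𝒲 x G = x := by
  subst hG
  unfold totalComponent
  rw [Finset.sum_eq_single_of_mem a (Finset.mem_range.2 (by omega))]
  · rw [Nat.add_sub_cancel_left]
    exact DirectSum.decompose_of_mem_same 𝒲 hx
  · intro i _ hi
    exact DirectSum.decompose_of_mem_ne 𝒲 hx fun h => hi (Prod.ext_iff.1 h).1.symm

/-- The partial sums of a chain telescope under `σ₁ + σ₂`: only `σ₁` of the last term survives. -/
theorem sigma_partial_sum {R : Type*} [CommRing R] {W : Type*} [AddCommGroup W] [Module R W]
    (σ₁ σ₂ : W →ₗ[R] W) (x : ℕ → W) (hx₀ : σ₂ (x 0) = 0) (n : ℕ)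
    (hchain : ∀ k < n, σ₁ (x k) = - σ₂ (x (k + 1))) :
    (σ₁ + σ₂) (∑ k ∈ Finset.range (n + 1), x k) = σ₁ (x n) := by
  induction n with
  | zero => simp [hx₀]
  | succ n ih =>
    rw [Finset.sum_range_succ, map_add, ih fun k hk => hchain k (by omega),
      hchain n (by omega), LinearMap.add_apply]
    abel

theorem full_chain_assembles_into_cocycle
    {R : Type*} [CommRing R] {W : Type*} [AddCommGroup W] [Module R W]
    (𝒲 : ℕ × ℕ → Submodule R W) [DirectSum.Decomposition 𝒲]
    (σ₁ σ₂ : W →ₗ[R] W)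
    (hσ₁mem : ∀ i j, 2 ≤ i → ∀ x ∈ 𝒲 (i, j), σ₁ x ∈ 𝒲 (i - 2, j))
    (hσ₁zero : ∀ i j, i ≤ 1 → ∀ x ∈ 𝒲 (i, j), σ₁ x = 0)
    (hσ₂mem : ∀ i j, 2 ≤ j → ∀ x ∈ 𝒲 (i, j), σ₂ x ∈ 𝒲 (i, j - 2))
    (hσ₂zero : ∀ i j, j ≤ 1 → ∀ x ∈ 𝒲 (i, j), σ₂ x = 0)
    (hσ₁σ₁ : σ₁ ∘ₗ σ₁ = 0) (hσ₂σ₂ : σ₂ ∘ₗ σ₂ = 0)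
    (hanti : σ₁ ∘ₗ σ₂ + σ₂ ∘ₗ σ₁ = 0)
    (G₁ G₂ : ℕ) (x : ℕ → W)
    (hx₀closed : σ₂ (x 0) = 0)
    (hxmem : ∀ k ≤ G₁ / 2, x k ∈ 𝒲 (G₁ - 2 * k, G₂ + 2 * k))
    (hxchain : ∀ k < G₁ / 2, σ₁ (x k) = - σ₂ (x (k + 1))) :
    totalComponent 𝒲 (∑ k ∈ Finset.range (G₁ / 2 + 1), x k) (G₁ + G₂) =
        ∑ k ∈ Finset.range (G₁ / 2 + 1), x k ∧
    (σ₁ + σ₂) (∑ k ∈ Finset.range (G₁ / 2 + 1), x k) = 0 := by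
  constructor
  · rw [totalComponent_sum]
    refine Finset.sum_congr rfl fun k hk => ?_
    have hk' : k ≤ G₁ / 2 := Nat.lt_succ_iff.1 (Finset.mem_range.1 hk)
    exact totalComponent_of_mem 𝒲 (by omega) (hxmem k hk')
  · rw [sigma_partial_sum σ₁ σ₂ x hx₀closed _ hxchain]
    exact hσ₁zero _ _ (by omega) _ (hxmem _ le_rfl)
end
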